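/- Let A ⊆ ℝ (or a Polish space) be an analytic set with ℋ^λ(A) = ∞ for some λ > 0. Then for every r > 0 there exists a closed (compact) subset F_r ⊆ A with r ≤ ℋ^λ(F_r) < ∞. -/

import Mathlib

open MeasureTheory
open scoped ENNReal

section NetContent

open Set Filter Topology PiNat

variable {α : Type*} {c : ℕ → ℝ≥0∞} {k j : ℕ}

/-- The cost of a cylinder of length at least `k` in `ℕ → α`; every other nonempty set has
infinite cost. -/
noncomputable def netCost (c : ℕ → ℝ≥0∞) (k : ℕ) (S : Set (ℕ → α)) : ℝ≥0∞ :=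
  ⨅ (j : ℕ) (_ : k ≤ j) (_ : ∀ x ∈ S, S = cylinder x j), c j

/-- The net content on `ℕ → α` given by coverings by cylinders of length at least `k`, where a
cylinder of length `j` costs `c j`. -/
noncomputable def netContent (c : ℕ → ℝ≥0∞) (k : ℕ) : OuterMeasure (ℕ → α) :=
  OuterMeasure.boundedBy (netCost c k)

theorem netCost_ne_top_imp {S : Set (ℕ → α)} (h : netCost c k S ≠ ∞) :
    ∃ j, k ≤ j ∧ ∀ x ∈ S, S = cylinder x j := by
  contrapose! h
  simp only [netCost, iInf_eq_top]
  intro j hj hS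
  obtain ⟨x, hx, hne⟩ := h j hj
  exact absurd (hS x hx) hne

theorem netContent_mono_level : Monotone (netContent (α := α) c) := by
  intro k k' h
  refine OuterMeasure.le_boundedBy.2 fun S ↦ (OuterMeasure.boundedBy_le S).trans ?_
  exact le_iInf fun j ↦ le_iInf fun hj ↦ iInf₂_le_of_le j (h.trans hj) le_rfl

theorem netContent_cylinder_le (x : ℕ → α) (h : k ≤ j) : netContent c k (cylinder x j) ≤ c j :=
  (OuterMeasure.boundedBy_le _).trans <| iInf₂_le_of_le j h <|
    iInf_le _ fun _ hy ↦ (mem_cylinder_iff_eq.1 hy).symm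

theorem netContent_inter_cylinder_le (S : Set (ℕ → α)) (x : ℕ → α) :
    netContent c k (S ∩ cylinder x k) ≤ c k :=
  (measure_mono inter_subset_right).trans (netContent_cylinder_le x le_rfl)

theorem exists_cover_of_netContent_lt {S : Set (ℕ → α)} {a : ℝ≥0∞} (h : netContent c k S < a) :
    ∃ t : ℕ → Set (ℕ → α), S ⊆ ⋃ n, t n ∧ ∑' n, ⨆ _ : (t n).Nonempty, netCost c k (t n) < a := by
  rw [netContent, OuterMeasure.boundedBy_apply] at h
  simpa [iInf_lt_iff] using h

theorem netContent_le_of_cover {S : Set (ℕ → α)} {t : ℕ → Set (ℕ → α)} (h : S ⊆ ⋃ n, t n) :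
    netContent c k S ≤ ∑' n, ⨆ _ : (t n).Nonempty, netCost c k (t n) := by
  rw [netContent, OuterMeasure.boundedBy_apply]
  exact iInf₂_le t h

theorem exists_isOpen_netContent_lt [TopologicalSpace α] [DiscreteTopology α]
    {S : Set (ℕ → α)} {a : ℝ≥0∞} (h : netContent c k S < a) :
    ∃ U, IsOpen U ∧ S ⊆ U ∧ netContent c k U < a := by
  obtain ⟨t, hS, ht⟩ := exists_cover_of_netContent_lt h
  refine ⟨⋃ n, t n, isOpen_iUnion fun n ↦ ?_, hS, (netContent_le_of_cover subset_rfl).trans_lt ht⟩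
  rcases (t n).eq_empty_or_nonempty with h0 | ⟨x, hx⟩
  · simp [h0]
  · have : netCost c k (t n) ≠ ∞ := by
      have := ENNReal.ne_top_of_tsum_ne_top ht.ne_top n
      rwa [iSup_pos ⟨x, hx⟩] at this
    obtain ⟨j, -, hj⟩ := netCost_ne_top_imp this
    rw [hj x hx]
    exact isOpen_cylinder _ x j

theorem netCost_empty (hc : Tendsto c atTop (𝓝 0)) : netCost c k (∅ : Set (ℕ → α)) = 0 := by
  refine le_antisymm (ge_of_tendsto' ((tendsto_add_atTop_iff_nat k).2 hc) fun i ↦ ?_) zero_le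
  exact iInf₂_le_of_le (i + k) (Nat.le_add_left k i) (iInf_le _ (by simp))

theorem netContent_isCaratheodory (hc : Tendsto c atTop (𝓝 0)) {T : Set (ℕ → α)}
    (hT : ∀ x ∈ T, cylinder x k ⊆ T) : (netContent c k).IsCaratheodory T := by
  refine OuterMeasure.boundedBy_caratheodory fun t ↦ ?_
  by_cases htop : netCost c k t = ∞
  · simp [htop]
  obtain ⟨j, hkj, hj⟩ := netCost_ne_top_imp htop
  rcases (t ∩ T).eq_empty_or_nonempty with h | ⟨x, hx⟩
  · rw [h, netCost_empty hc, zero_add, sdiff_eq_left.2 (disjoint_iff_inter_eq_empty.2 h)]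
  · have : t ⊆ T := by
      rw [hj x hx.1]
      exact (cylinder_anti x hkj).trans (hT x hx.2)
    rw [inter_eq_left.2 this, sdiff_eq_empty.2 this, netCost_empty hc, add_zero]

theorem netContent_eq_add_diff (hc : Tendsto c atTop (𝓝 0)) {T : Set (ℕ → α)}
    (hT : ∀ x ∈ T, cylinder x k ⊆ T) (S : Set (ℕ → α)) :
    netContent c k S = netContent c k (S ∩ T) + netContent c k (S \ T) :=
  netContent_isCaratheodory hc hT S

theorem netContent_succ_le_of_lt {S : Set (ℕ → α)} (h : netContent c k S < c k) :
    netContent c (k + 1) S ≤ netContent c k S := by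
  refine le_of_forall_gt fun b hb ↦ ?_
  obtain ⟨t, hS, ht⟩ := exists_cover_of_netContent_lt (lt_min hb h)
  refine ((netContent_le_of_cover hS).trans ?_).trans_lt (ht.trans_le (min_le_left _ _))
  refine ENNReal.tsum_le_tsum fun n ↦ iSup_le fun hn ↦ ?_
  have hlt : netCost c k (t n) < c k := by
    have := (ENNReal.le_tsum n).trans_lt (ht.trans_le (min_le_right _ _))
    rwa [iSup_pos hn] at this
  rw [iSup_pos hn]
  refine le_of_forall_gt fun b hb ↦ ?_
  have := lt_min hb hlt
  simp only [netCost, iInf_lt_iff] at this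
  obtain ⟨j, hj, hjt, hcj⟩ := this
  have hkj : k ≠ j := by
    rintro rfl
    exact (hcj.trans_le (min_le_right _ _)).false
  exact (iInf₂_le_of_le j (by lia) (iInf_le _ hjt)).trans_lt (hcj.trans_le (min_le_left _ _))

theorem netContent_succ_le_of_le {S : Set (ℕ → α)} (h : netContent c (k + 1) S ≤ c k) :
    netContent c (k + 1) S ≤ netContent c k S := by
  rcases lt_or_ge (netContent c k S) (c k) with h' | h'
  · exact netContent_succ_le_of_lt h'
  · exact h.trans h'

/-- The set of sequences whose first `k` terms are prescribed. -/
def netCell (k : ℕ) (a : Fin k → α) : Set (ℕ → α) := {x | ∀ i : Fin k, x i = a i}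

theorem netCell_eq_cylinder {a : Fin k → α} {x : ℕ → α} (hx : x ∈ netCell k a) :
    netCell k a = cylinder x k := by
  ext y
  simp only [netCell, mem_ofPred_eq, mem_cylinder_iff] at hx ⊢
  exact ⟨fun h i hi ↦ (h ⟨i, hi⟩).trans (hx ⟨i, hi⟩).symm, fun h i ↦ (h i i.2).trans (hx i)⟩

theorem iUnion_netCell : ⋃ a : Fin k → α, netCell k a = univ :=
  eq_univ_of_forall fun x ↦ mem_iUnion.2 ⟨fun i ↦ x i, fun _ ↦ rfl⟩

theorem netCell_disjoint {a b : Fin k → α} (h : a ≠ b) : Disjoint (netCell k a) (netCell k b) :=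
  disjoint_left.2 fun _ hx hy ↦ h (funext fun i ↦ (hx i).symm.trans (hy i))

theorem outerMeasure_le_tsum_netCell [Countable α] (m : OuterMeasure (ℕ → α)) (k : ℕ)
    (S : Set (ℕ → α)) : m S ≤ ∑' a : Fin k → α, m (S ∩ netCell k a) := by
  refine (measure_mono (μ := m) ?_).trans
    (measure_iUnion_le (μ := m) fun a : Fin k → α ↦ S ∩ netCell k a)
  rw [← inter_iUnion, iUnion_netCell, inter_univ]

theorem tsum_netContent_le (hc : Tendsto c atTop (𝓝 0)) (S : Set (ℕ → α)) :
    ∑' a : Fin k → α, netContent c k (S ∩ netCell k a) ≤ netContent c k S := by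
  rw [ENNReal.tsum_eq_iSup_sum]
  refine iSup_le fun s ↦ ?_
  suffices ∑ a ∈ s, netContent c k (S ∩ netCell k a) ≤
      netContent c k (S ∩ ⋃ a ∈ s, netCell k a) from
    this.trans (measure_mono (μ := netContent c k) inter_subset_left)
  classical
  induction s using Finset.induction_on with
  | empty => simp
  | insert a s ha ih =>
    rw [Finset.sum_insert ha, netContent_eq_add_diff hc
      (S := S ∩ ⋃ b ∈ insert a s, netCell k b) (T := netCell k a)
      (fun x hx ↦ (netCell_eq_cylinder hx).ge)]
    refine add_le_add (measure_mono (μ := netContent c k) ?_)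
      (ih.trans (measure_mono (μ := netContent c k) ?_))
    · exact fun x hx ↦ ⟨⟨hx.1, mem_biUnion (Finset.mem_insert_self a s) hx.2⟩, hx.2⟩
    · rintro x ⟨hxS, hx⟩
      obtain ⟨b, hb, hxb⟩ := mem_iUnion₂.1 hx
      refine ⟨⟨hxS, mem_biUnion (Finset.mem_insert_of_mem hb) hxb⟩, fun hxa ↦ ?_⟩
      exact disjoint_left.1 (netCell_disjoint (ne_of_mem_of_not_mem hb ha)) hxb hxa

theorem netContent_succ_le_of_forall [Countable α] (hc : Tendsto c atTop (𝓝 0)) {S : Set (ℕ → α)}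
    (h : ∀ x ∈ S,
      netContent c (k + 1) (S ∩ cylinder x k) ≤ netContent c k (S ∩ cylinder x k)) :
    netContent c (k + 1) S ≤ netContent c k S := by
  refine ((outerMeasure_le_tsum_netCell _ k S).trans (ENNReal.tsum_le_tsum fun a ↦ ?_)).trans
    (tsum_netContent_le hc S)
  rcases (S ∩ netCell k a).eq_empty_or_nonempty with h0 | ⟨x, hxS, hxa⟩
  · simp [h0]
  · rw [netCell_eq_cylinder hxa]
    exact h x hxS

theorem trim_netContent [TopologicalSpace α] [DiscreteTopology α] [MeasurableSpace (ℕ → α)]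
    [OpensMeasurableSpace (ℕ → α)] : (netContent (α := α) c k).trim = netContent c k := by
  refine le_antisymm (OuterMeasure.le_boundedBy'.2 fun t ⟨x, hx⟩ ↦ ?_) (OuterMeasure.le_trim _)
  by_cases htop : netCost c k t = ∞
  · simp [htop]
  obtain ⟨j, -, hj⟩ := netCost_ne_top_imp htop
  rw [OuterMeasure.trim_eq]
  · exact OuterMeasure.boundedBy_le t
  · rw [hj x hx]
    exact (isOpen_cylinder _ x j).measurableSet

/-- The supremum of the net contents over all levels is continuous along increasing sequences of
arbitrary sets, because it is a Borel regular measure. -/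
theorem iSup_netContent_iUnion [Countable α] (hc : Tendsto c atTop (𝓝 0))
    {E : ℕ → Set (ℕ → α)} (hE : Monotone E) :
    (⨆ j, netContent c j) (⋃ n, E n) = ⨆ n, (⨆ j, netContent c j) (E n) := by
  let : TopologicalSpace α := ⊥
  have : DiscreteTopology α := ⟨rfl⟩
  let : MeasurableSpace (ℕ → α) := borel _
  have : BorelSpace (ℕ → α) := ⟨rfl⟩
  have hle : borel (ℕ → α) ≤ (⨆ j, netContent (α := α) c j).caratheodory := by
    rw [(isTopologicalBasis_cylinders fun _ : ℕ ↦ α).borel_eq_generateFrom]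
    refine MeasurableSpace.generateFrom_le ?_
    rintro _ ⟨x, n, rfl⟩
    refine (OuterMeasure.isCaratheodory_iff_le _).2 fun t ↦ ?_
    simp only [OuterMeasure.iSup_apply]
    rw [ENNReal.iSup_add_iSup_of_monotone (fun _ _ h ↦ netContent_mono_level h _)
      (fun _ _ h ↦ netContent_mono_level h _)]
    refine iSup_le fun j ↦ le_iSup_of_le (max j n) ?_
    rw [netContent_eq_add_diff (k := max j n) hc (T := cylinder x n) _ t]
    · exact add_le_add (netContent_mono_level (le_max_left _ _) _)
        (netContent_mono_level (le_max_left _ _) _)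
    · intro y hy
      rw [← mem_cylinder_iff_eq.1 hy]
      exact cylinder_anti y (le_max_right _ _)
  have key (S : Set (ℕ → α)) :
      (⨆ j, netContent c j) S = (⨆ j, netContent c j).toMeasure hle S := by
    rw [← Measure.coe_toOuterMeasure, toMeasure_toOuterMeasure, OuterMeasure.trim_iSup]
    simp only [trim_netContent]
  simp only [key]
  exact hE.measure_iUnion

theorem netContent_iUnion_le_of_saturated [Countable α] (hc : Tendsto c atTop (𝓝 0))
    {E : ℕ → Set (ℕ → α)} (hE : Monotone E) {T : Set (ℕ → α)}
    (hT : ∀ x ∈ T, cylinder x k ⊆ T)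
    (hsat : ∀ x ∈ T, c k ≤ ⨆ n, netContent c k (E n ∩ cylinder x k)) :
    netContent c k ((⋃ n, E n) ∩ T) ≤ ⨆ n, netContent c k (E n ∩ T) := by
  have hmono (a : Fin k → α) :
      Monotone fun n ↦ netContent c k (E n ∩ T ∩ netCell k a) := fun _ _ h ↦
    measure_mono (inter_subset_inter_left _ (inter_subset_inter_left _ (hE h)))
  calc netContent c k ((⋃ n, E n) ∩ T)
    _ ≤ ∑' a : Fin k → α, netContent c k ((⋃ n, E n) ∩ T ∩ netCell k a) :=
      outerMeasure_le_tsum_netCell _ k _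
    _ ≤ ∑' a : Fin k → α, ⨆ n, netContent c k (E n ∩ T ∩ netCell k a) := by
      refine ENNReal.tsum_le_tsum fun a ↦ ?_
      rcases (T ∩ netCell k a).eq_empty_or_nonempty with h0 | ⟨x, hxT, hxa⟩
      · simp [inter_assoc, h0]
      · have hsub : T ∩ cylinder x k = cylinder x k := inter_eq_right.2 (hT x hxT)
        simp only [netCell_eq_cylinder hxa, inter_assoc, hsub]
        exact (netContent_inter_cylinder_le _ x).trans (hsat x hxT)
    _ ≤ ⨆ n, ∑' a : Fin k → α, netContent c k (E n ∩ T ∩ netCell k a) := by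
      rw [ENNReal.tsum_eq_iSup_sum]
      refine iSup_le fun s ↦ ?_
      rw [ENNReal.finsetSum_iSup_of_monotone hmono]
      exact iSup_mono fun n ↦ ENNReal.sum_le_tsum s
    _ ≤ ⨆ n, netContent c k (E n ∩ T) := iSup_mono fun n ↦ tsum_netContent_le hc _

/-- The increasing sets lemma: net contents are continuous along increasing sequences of arbitrary
sets. -/
theorem netContent_iUnion_le [Countable α] (hc : Tendsto c atTop (𝓝 0))
    {E : ℕ → Set (ℕ → α)} (hE : Monotone E) :
    netContent c k (⋃ n, E n) ≤ ⨆ n, netContent c k (E n) := by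
  let sat (i : ℕ) : Set (ℕ → α) :=
    {x | c (k + i) ≤ ⨆ n, netContent c (k + i) (E n ∩ cylinder x (k + i))}
  let U (i : ℕ) : Set (ℕ → α) := {x | ∀ i' < i, x ∉ sat i'}
  let T (i : ℕ) : Set (ℕ → α) := U i ∩ sat i
  let a (i : ℕ) : ℝ≥0∞ := ⨆ n, netContent c (k + i) (E n ∩ U i)
  let s (i : ℕ) : ℝ≥0∞ := ⨆ n, netContent c (k + i) (E n ∩ T i)
  let V : Set (ℕ → α) := {x | ∀ i, x ∉ sat i}
  have hcyl_sat {i i' : ℕ} (h : i' ≤ i) {x y : ℕ → α} (hy : y ∈ cylinder x (k + i)) :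
      y ∈ sat i' ↔ x ∈ sat i' := by
    have := mem_cylinder_iff_eq.1 (cylinder_anti x (Nat.add_le_add_left h k) hy)
    simp only [sat, mem_ofPred_eq, this]
  have hcyl_T (i : ℕ) : ∀ x ∈ T i, cylinder x (k + i) ⊆ T i := fun x hx y hy ↦
    ⟨fun i' hi' ↦ (hcyl_sat hi'.le hy).not.2 (hx.1 i' hi'), (hcyl_sat le_rfl hy).2 hx.2⟩
  have hU_succ (i : ℕ) : U (i + 1) = U i \ sat i := by
    ext x
    simp only [U, mem_ofPred_eq, Set.mem_sdiff, Nat.lt_succ_iff_lt_or_eq, or_imp, forall_and,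
      forall_eq]
  -- passing to the next level does not change the content of a set of unsaturated points
  have hunsat {i n : ℕ} {S : Set (ℕ → α)} (hS : S ⊆ E n) (hS' : ∀ x ∈ S, x ∉ sat i) :
      netContent c (k + i + 1) S ≤ netContent c (k + i) S := by
    refine netContent_succ_le_of_forall hc fun x hx ↦ netContent_succ_le_of_lt ?_
    refine lt_of_le_of_lt ?_ (not_le.1 (hS' x hx))
    exact (measure_mono (inter_subset_inter_left _ hS)).trans
      (le_iSup (fun n ↦ netContent c (k + i) (E n ∩ cylinder x (k + i))) n)
  have hstep (i : ℕ) : s i + a (i + 1) ≤ a i := by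
    simp only [s, a]
    rw [ENNReal.iSup_add_iSup_of_monotone
      (fun _ _ h ↦ measure_mono (inter_subset_inter_left _ (hE h)))
      (fun _ _ h ↦ measure_mono (inter_subset_inter_left _ (hE h)))]
    refine iSup_mono fun n ↦ ?_
    rw [netContent_eq_add_diff hc (hcyl_T i) (E n ∩ U i)]
    refine add_le_add (measure_mono fun x hx ↦ ⟨⟨hx.1, hx.2.1⟩, hx.2⟩) ?_
    refine (hunsat inter_subset_left fun x hx ↦ ?_).trans (measure_mono fun x hx ↦ ?_)
    · exact hx.2 i (Nat.lt_succ_self i)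
    · have := hU_succ i ▸ hx.2
      exact ⟨⟨hx.1, this.1⟩, fun h ↦ this.2 h.2⟩
  have hsum (N : ℕ) : ∑ i ∈ Finset.range N, s i + a N ≤ a 0 := by
    induction N with
    | zero => simp
    | succ N ih =>
      rw [Finset.sum_range_succ, add_assoc]
      exact (add_le_add_right (hstep N) _).trans ih
  have hR (N : ℕ) : netContent c k ((⋃ n, E n) ∩ V) ≤ a N := by
    have hlevel (n i : ℕ) : netContent c (k + i) (E n ∩ V) ≤ netContent c k (E n ∩ V) := by
      induction i with
      | zero => rfl
      | succ i ih =>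
        exact (hunsat inter_subset_left fun x hx ↦ (show ∀ i, x ∉ sat i from hx.2) i).trans ih
    calc netContent c k ((⋃ n, E n) ∩ V)
      _ ≤ (⨆ j, netContent c j) (⋃ n, E n ∩ V) := by
        rw [iUnion_inter, OuterMeasure.iSup_apply]
        exact le_iSup (fun j ↦ netContent c j (⋃ n, E n ∩ V)) k
      _ = ⨆ n, ⨆ j, netContent c j (E n ∩ V) := by
        rw [iSup_netContent_iUnion hc fun _ _ h ↦ inter_subset_inter_left _ (hE h)]
        simp only [OuterMeasure.iSup_apply]
      _ ≤ a N := by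
        refine iSup_le fun n ↦ iSup_le fun j ↦ le_iSup_of_le n ?_
        calc netContent c j (E n ∩ V)
          _ ≤ netContent c (k + j) (E n ∩ V) := netContent_mono_level (Nat.le_add_left j k) _
          _ ≤ netContent c k (E n ∩ V) := hlevel n j
          _ ≤ netContent c (k + N) (E n ∩ V) := netContent_mono_level (Nat.le_add_right k N) _
          _ ≤ netContent c (k + N) (E n ∩ U N) :=
            measure_mono fun x hx ↦ ⟨hx.1, fun i _ ↦ hx.2 i⟩
  have hcover : ⋃ n, E n ⊆ ((⋃ n, E n) ∩ V) ∪ ⋃ i, (⋃ n, E n) ∩ T i := by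
    intro x hx
    classical
    by_cases h : ∃ i, x ∈ sat i
    · exact Or.inr <| mem_iUnion.2
        ⟨Nat.find h, hx, fun i hi ↦ Nat.find_min h hi, Nat.find_spec h⟩
    · exact Or.inl ⟨hx, not_exists.1 h⟩
  calc netContent c k (⋃ n, E n)
    _ ≤ netContent c k ((⋃ n, E n) ∩ V) + ∑' i, netContent c k ((⋃ n, E n) ∩ T i) :=
      (measure_mono hcover).trans <| (measure_union_le _ _).trans <|
        add_le_add_right (measure_iUnion_le _) _
    _ ≤ netContent c k ((⋃ n, E n) ∩ V) + ∑' i, s i := by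
      gcongr with i
      exact (netContent_mono_level (Nat.le_add_right k i) _).trans
        (netContent_iUnion_le_of_saturated hc hE (hcyl_T i) fun x hx ↦ hx.2)
    _ ≤ a 0 := by
      rw [ENNReal.tsum_eq_iSup_nat, ENNReal.add_iSup]
      refine iSup_le fun N ↦ ?_
      rw [add_comm]
      exact (add_le_add_right (hR N) _).trans (hsum N)
    _ = ⨆ n, netContent c k (E n) := by simp [a, U]

/-- An open set containing every sequence bounded by `b` contains every sequence whose first `i`
terms are bounded by `b`, for some `i`. -/
theorem exists_initial_bound_subset {b : ℕ → ℕ} {V : Set (ℕ → ℕ)} (hV : IsOpen V)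
    (h : Iic b ⊆ V) : ∃ i, {x : ℕ → ℕ | ∀ i' < i, x i' ≤ b i'} ⊆ V := by
  by_contra! hcon
  simp only [not_subset] at hcon
  choose x hx hxV using hcon
  have hK : IsCompact (Iic b) := by
    rw [← pi_univ_Iic]
    exact isCompact_univ_pi fun i ↦ (finite_Iic (b i)).isCompact
  obtain ⟨y, hy, φ, hφ, hlim⟩ := hK.tendsto_subseq (x := fun n i ↦ min (x n i) (b i))
    fun n i ↦ min_le_right _ _
  have hlim' : Tendsto (x ∘ φ) atTop (𝓝 y) := by
    rw [tendsto_pi_nhds] at hlim ⊢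
    refine fun i ↦ (hlim i).congr' ?_
    filter_upwards [eventually_gt_atTop i] with n hn
    exact min_eq_left (hx (φ n) i (hn.trans_le (hφ.id_le n)))
  obtain ⟨n, hn⟩ := (hlim'.eventually (hV.mem_nhds (h hy))).exists
  exact hxV (φ n) hn

/-- Capacitability of analytic sets for net contents. -/
theorem exists_isCompact_le_netContent [Countable α] [TopologicalSpace α] [DiscreteTopology α]
    (hc : Tendsto c atTop (𝓝 0)) {A : Set (ℕ → α)} (hA : AnalyticSet A) {r : ℝ≥0∞}
    (hr : r < netContent c k A) : ∃ K ⊆ A, IsCompact K ∧ r ≤ netContent c k K := by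
  rw [AnalyticSet] at hA
  rcases hA with rfl | ⟨f, hf, rfl⟩
  · simp at hr
  have hex (i : ℕ) (S : {S : Set (ℕ → ℕ) // r < netContent c k (f '' S)}) :
      ∃ v, r < netContent c k (f '' (S.1 ∩ {x | x i ≤ v})) := by
    have hunion : f '' S.1 = ⋃ v, f '' (S.1 ∩ {x | x i ≤ v}) := by
      rw [← image_iUnion, ← inter_iUnion, inter_eq_left.2]
      exact fun x _ ↦ mem_iUnion.2 ⟨x i, le_refl (x i)⟩
    have hlt := S.2
    rw [hunion] at hlt
    refine lt_iSup_iff.1 (hlt.trans_le (netContent_iUnion_le hc fun v w hvw ↦ ?_))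
    exact image_mono (inter_subset_inter_right _ fun x hx ↦ le_trans hx hvw)
  choose v hv using hex
  let S (i : ℕ) : {S : Set (ℕ → ℕ) // r < netContent c k (f '' S)} :=
    Nat.rec ⟨univ, by rwa [image_univ]⟩ (fun i S ↦ ⟨S.1 ∩ {x | x i ≤ v i S}, hv i S⟩) i
  let b (i : ℕ) : ℕ := v i (S i)
  have hS (i : ℕ) : (S i).1 = {x | ∀ i' < i, x i' ≤ b i'} := by
    induction i with
    | zero => simp [S]
    | succ i ih =>
      change (S i).1 ∩ {x | x i ≤ b i} = _
      rw [ih]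
      ext x
      simp only [mem_inter_iff, mem_ofPred_eq, Nat.lt_succ_iff_lt_or_eq, or_imp, forall_and,
        forall_eq]
  have hK : IsCompact (Iic b) := by
    rw [← pi_univ_Iic]
    exact isCompact_univ_pi fun i ↦ (finite_Iic (b i)).isCompact
  refine ⟨f '' Iic b, image_subset_range _ _, hK.image hf, ?_⟩
  by_contra! hlt
  obtain ⟨U, hU, hKU, hUr⟩ := exists_isOpen_netContent_lt hlt
  obtain ⟨i, hi⟩ := exists_initial_bound_subset (hU.preimage hf) (image_subset_iff.1 hKU)
  rw [← hS i, ← image_subset_iff] at hi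
  exact ((S i).2.trans_le (measure_mono hi)).not_ge hUr.le

/-- If no proper compact subset of `F` has the same content at level `k`, then contents of subsets
of `F` do not grow when passing to level `k + 1`. -/
theorem netContent_succ_le_of_minimal [Countable α] [TopologicalSpace α] [DiscreteTopology α]
    (hc : Tendsto c atTop (𝓝 0)) {F : Set (ℕ → α)} (hF : IsCompact F)
    (hmin : ∀ F' ⊆ F, IsCompact F' → netContent c k F ≤ netContent c k F' → F' = F)
    {S : Set (ℕ → α)} (hS : S ⊆ F) : netContent c (k + 1) S ≤ netContent c k S := by
  refine netContent_succ_le_of_forall hc fun x hx ↦ netContent_succ_le_of_le ?_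
  refine (measure_mono (inter_subset_inter_left _ hS)).trans ?_
  by_contra! hlt
  obtain ⟨N, hN, hkN⟩ : ∃ N, c k + c N < netContent c (k + 1) (F ∩ cylinder x k) ∧ k + 1 ≤ N := by
    have : Tendsto (fun N ↦ c k + c N) atTop (𝓝 (c k + 0)) := hc.const_add _
    rw [add_zero] at this
    exact ((this.eventually (gt_mem_nhds hlt)).and (eventually_ge_atTop _)).exists
  set C := cylinder x k
  set D := cylinder x N
  have hDC : D ⊆ C := cylinder_anti x (by lia)
  have hlt' : c k < netContent c (k + 1) ((F \ D) ∩ C) := by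
    by_contra! hle
    refine hN.not_ge ?_
    calc netContent c (k + 1) (F ∩ C)
      _ ≤ netContent c (k + 1) ((F \ D) ∩ C ∪ D) := measure_mono fun y hy ↦
        (em (y ∈ D)).elim Or.inr fun h ↦ Or.inl ⟨⟨hy.1, h⟩, hy.2⟩
      _ ≤ _ := (measure_union_le _ _).trans (add_le_add hle (netContent_cylinder_le x hkN))
  have hle : netContent c k F ≤ netContent c k (F \ D) := by
    have hC : ∀ y ∈ C, cylinder y k ⊆ C := fun y hy ↦ (mem_cylinder_iff_eq.1 hy).le
    rw [netContent_eq_add_diff hc hC F, netContent_eq_add_diff hc hC (F \ D)]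
    refine add_le_add ((netContent_inter_cylinder_le F x).trans ?_)
      (measure_mono fun y hy ↦ ⟨⟨hy.1, fun h ↦ hy.2 (hDC h)⟩, hy.2⟩)
    by_contra! h
    exact (hlt'.trans_le (netContent_succ_le_of_lt h)).not_ge h.le
  have := hmin (F \ D) sdiff_subset (hF.diff (isOpen_cylinder _ x N)) hle
  exact (this.ge (hS hx)).2 (self_mem_cylinder x N)

/-- A compact set contains a compact subset whose contents at all levels from `k` on are equal to
the content of the original set at level `k`. -/
theorem exists_isCompact_netContent_le [Countable α] [TopologicalSpace α] [DiscreteTopology α]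
    (hc : Tendsto c atTop (𝓝 0)) {K : Set (ℕ → α)} (hK : IsCompact K) :
    ∃ F ⊆ K, IsCompact F ∧ netContent c k K ≤ netContent c k F ∧
      ∀ j, netContent c j F ≤ netContent c k K := by
  let 𝒮 : Set (Set (ℕ → α)) := {F | IsCompact F ∧ netContent c k K ≤ netContent c k F}
  obtain ⟨F, hFK, hF⟩ : ∃ F ⊆ K, Minimal (· ∈ 𝒮) F := by
    refine zorn_superset_nonempty 𝒮 (fun 𝒞 h𝒞 hchain hne ↦ ?_) K ⟨hK, le_rfl⟩
    refine ⟨⋂₀ 𝒞, ⟨?_, ?_⟩, fun s hs ↦ sInter_subset_of_mem hs⟩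
    · obtain ⟨F₀, hF₀⟩ := hne
      exact (h𝒞 hF₀).1.of_isClosed_subset (isClosed_sInter fun s hs ↦ (h𝒞 hs).1.isClosed)
        (sInter_subset_of_mem hF₀)
    · by_contra! hlt
      obtain ⟨U, hU, hsub, hUlt⟩ := exists_isOpen_netContent_lt hlt
      have : Nonempty 𝒞 := hne.to_subtype
      rw [sInter_eq_iInter] at hsub
      obtain ⟨⟨F', hF'⟩, hF'U⟩ := exists_subset_nhds_of_isCompact
        (V := fun i : 𝒞 ↦ i.1)
        (fun s t ↦ (hchain.total s.2 t.2).elim (fun h ↦ ⟨s, subset_rfl, h⟩)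
          fun h ↦ ⟨t, h, subset_rfl⟩)
        (fun i : 𝒞 ↦ (h𝒞 i.2).1)
        fun x hx ↦ hU.mem_nhds (hsub hx)
      exact (((h𝒞 hF').2.trans (measure_mono hF'U)).trans_lt hUlt).false
  have hmin (i : ℕ) : netContent c (k + i) F ≤ netContent c k F ∧ ∀ F' ⊆ F, IsCompact F' →
      netContent c (k + i) F ≤ netContent c (k + i) F' → F' = F := by
    induction i with
    | zero => exact ⟨le_rfl, fun F' hF'F hF' hle ↦
        (hF.eq_of_subset ⟨hF', hF.prop.2.trans hle⟩ hF'F)⟩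
    | succ i ih =>
      have hsucc {S : Set (ℕ → α)} (hS : S ⊆ F) :=
        netContent_succ_le_of_minimal hc hF.prop.1 ih.2 hS
      refine ⟨(hsucc subset_rfl).trans ih.1, fun F' hF'F hF' hle ↦ ih.2 F' hF'F hF' ?_⟩
      exact ((netContent_mono_level (Nat.le_succ (k + i)) F).trans hle).trans (hsucc hF'F)
  refine ⟨F, hFK, hF.prop.1, hF.prop.2, fun j ↦ ?_⟩
  calc netContent c j F
    _ ≤ netContent c (k + j) F := netContent_mono_level (Nat.le_add_left j k) F
    _ ≤ netContent c k F := (hmin j).1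
    _ ≤ netContent c k K := measure_mono hFK

theorem netContent_lt_top_of_isCompact [TopologicalSpace α] [DiscreteTopology α] (hck : c k ≠ ∞)
    {K : Set (ℕ → α)} (hK : IsCompact K) : netContent c k K < ∞ := by
  refine hK.induction_on (by simp) (fun s t hst ht ↦ (measure_mono hst).trans_lt ht)
    (fun s t hs ht ↦ (measure_union_le s t).trans_lt (ENNReal.add_lt_top.2 ⟨hs, ht⟩))
    fun x _ ↦ ⟨cylinder x k, mem_nhdsWithin_of_mem_nhds ?_, ?_⟩
  · exact (isOpen_cylinder _ x k).mem_nhds (self_mem_cylinder x k)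
  · exact (netContent_cylinder_le x le_rfl).trans_lt hck.lt_top

/-- The sequence of dyadic approximations of a real number, encoded by their numerators. -/
noncomputable def dyadicFloor (x : ℝ) (j : ℕ) : ℤ := ⌊(2 : ℝ) ^ (j + 1) * x⌋

theorem dist_le_of_dyadicFloor_mem_cylinder {x y : ℝ} {n : ℕ} (hn : 0 < n)
    (h : dyadicFloor x ∈ cylinder (dyadicFloor y) n) : dist x y ≤ (1 / 2) ^ n := by
  obtain ⟨m, rfl⟩ := Nat.exists_eq_succ_of_ne_zero hn.ne'
  have := Int.abs_sub_lt_one_of_floor_eq_floor (h m (Nat.lt_succ_self m))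
  rw [← mul_sub, abs_mul, abs_of_pos (by positivity)] at this
  rw [Real.dist_eq, one_div, inv_pow, ← one_div, le_div_iff₀ (by positivity), mul_comm]
  exact this.le

theorem dyadicFloor_mem_cylinder {x y : ℝ} {n : ℕ} (h : ⌊(2 : ℝ) ^ n * x⌋ = ⌊(2 : ℝ) ^ n * y⌋) :
    dyadicFloor x ∈ cylinder (dyadicFloor y) n := by
  intro i hi
  obtain ⟨m, rfl⟩ := Nat.exists_eq_add_of_le (Nat.succ_le_of_lt hi)
  have key (z : ℝ) : dyadicFloor z i = ⌊(2 : ℝ) ^ (i + 1 + m) * z⌋ / ((2 ^ m : ℕ) : ℤ) := by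
    rw [← Int.floor_div_natCast, dyadicFloor]
    congr 1
    push_cast
    field_simp
    ring
  rw [key, key]
  exact congrArg (· / ((2 ^ m : ℕ) : ℤ)) h

theorem dyadicFloor_injective : Function.Injective dyadicFloor := by
  intro x y h
  have hle (n : ℕ) : dist x y ≤ (1 / 2) ^ (n + 1) :=
    dist_le_of_dyadicFloor_mem_cylinder n.succ_pos (h ▸ self_mem_cylinder _ _)
  have h0 : Tendsto (fun n : ℕ ↦ (1 / 2 : ℝ) ^ (n + 1)) atTop (𝓝 0) :=
    (tendsto_add_atTop_iff_nat 1).2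
      (tendsto_pow_atTop_nhds_zero_of_lt_one (by norm_num) (by norm_num))
  exact dist_le_zero.1 (ge_of_tendsto' h0 hle)

theorem measurable_dyadicFloor : Measurable dyadicFloor :=
  measurable_pi_lambda _ fun _ ↦ Int.measurable_floor.comp (measurable_const_mul _)

theorem continuousOn_invFun_dyadicFloor :
    ContinuousOn (Function.invFun dyadicFloor) (range dyadicFloor) := by
  rintro _ ⟨x, rfl⟩
  rw [ContinuousWithinAt, Function.leftInverse_invFun dyadicFloor_injective x,
    Metric.tendsto_nhds]
  intro ε hε
  obtain ⟨n, hn⟩ := exists_pow_lt_of_lt_one hε (show (1 / 2 : ℝ) < 1 by norm_num)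
  filter_upwards [self_mem_nhdsWithin, mem_nhdsWithin_of_mem_nhds
    ((isOpen_cylinder _ (dyadicFloor x) (n + 1)).mem_nhds (self_mem_cylinder _ _))]
  rintro _ ⟨y, rfl⟩ hy
  rw [Function.leftInverse_invFun dyadicFloor_injective y]
  refine (dist_le_of_dyadicFloor_mem_cylinder n.succ_pos hy).trans_lt (lt_of_le_of_lt ?_ hn)
  exact pow_le_pow_of_le_one (by norm_num) (by norm_num) n.le_succ

/-- The `l`-th power of the length of a dyadic interval of level `j`. -/
noncomputable def dyadicCost (l : ℝ) (j : ℕ) : ℝ≥0∞ := ((2 : ℝ≥0∞)⁻¹ ^ j) ^ l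

theorem tendsto_inv_two_pow : Tendsto (fun j ↦ (2 : ℝ≥0∞)⁻¹ ^ j) atTop (𝓝 0) :=
  ENNReal.tendsto_pow_atTop_nhds_zero_of_lt_one (by simp)

theorem tendsto_dyadicCost {l : ℝ} (hl : 0 < l) : Tendsto (dyadicCost l) atTop (𝓝 0) := by
  have := ((ENNReal.continuous_rpow_const (y := l)).tendsto 0).comp tendsto_inv_two_pow
  rwa [ENNReal.zero_rpow_of_pos hl] at this

theorem dyadicCost_ne_top {l : ℝ} (j : ℕ) : dyadicCost l j ≠ ∞ := by
  simp [dyadicCost]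

theorem hausdorffMeasure_le_iSup_netContent {l : ℝ} (hl : 0 < l) (S : Set ℝ) :
    μH[l] S ≤ ⨆ k, netContent (dyadicCost l) k (dyadicFloor '' S) := by
  rw [Measure.hausdorffMeasure, ← OuterMeasure.coe_mkMetric, OuterMeasure.mkMetric,
    OuterMeasure.mkMetric'.eq_iSup_nat, OuterMeasure.iSup_apply]
  refine iSup_le fun n ↦ ?_
  obtain ⟨k, hk, hk0⟩ : ∃ k, (2 : ℝ≥0∞)⁻¹ ^ k < (n : ℝ≥0∞)⁻¹ ∧ 0 < k :=
    ((tendsto_inv_two_pow.eventually (gt_mem_nhds (by simp))).and (eventually_gt_atTop 0)).exists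
  refine le_iSup_of_le k ?_
  have hle : OuterMeasure.map dyadicFloor
      (OuterMeasure.mkMetric'.pre (fun s : Set ℝ ↦ Metric.ediam s ^ l) (n : ℝ≥0∞)⁻¹) ≤
      netContent (dyadicCost l) k := by
    refine OuterMeasure.le_boundedBy'.2 fun T ⟨x, hx⟩ ↦ le_iInf fun j ↦ le_iInf fun hj ↦
      le_iInf fun hT ↦ ?_
    rw [OuterMeasure.map_apply, hT x hx]
    have hdiam : Metric.ediam (dyadicFloor ⁻¹' cylinder x j) ≤ (2 : ℝ≥0∞)⁻¹ ^ j := by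
      refine Metric.ediam_le fun y hy z hz ↦ ?_
      have hmem : dyadicFloor y ∈ cylinder (dyadicFloor z) j := by
        rw [mem_cylinder_iff_eq.1 hz]
        exact hy
      rw [edist_dist]
      refine (ENNReal.ofReal_le_ofReal
        (dist_le_of_dyadicFloor_mem_cylinder (hk0.trans_le hj) hmem)).trans_eq ?_
      rw [ENNReal.ofReal_pow (by norm_num), one_div, ENNReal.ofReal_inv_of_pos two_pos,
        ENNReal.ofReal_ofNat]
    have hjn : (2 : ℝ≥0∞)⁻¹ ^ j ≤ (n : ℝ≥0∞)⁻¹ :=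
      (pow_le_pow_of_le_one zero_le (by simp) hj).trans hk.le
    exact (OuterMeasure.mkMetric'.pre_le (hdiam.trans hjn)).trans
      (ENNReal.rpow_le_rpow hdiam hl.le)
  refine le_trans ?_ (hle (dyadicFloor '' S))
  rw [OuterMeasure.map_apply]
  exact measure_mono (subset_preimage_image _ _)

theorem netContent_image_dyadicFloor_le_of_ediam_le {l : ℝ} (hl : 0 < l) {k : ℕ} {s : Set ℝ}
    (hs : Metric.ediam s ≤ (2 : ℝ≥0∞)⁻¹ ^ k) :
    netContent (dyadicCost l) k (dyadicFloor '' s) ≤ 3 * 2 ^ l * Metric.ediam s ^ l := by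
  rcases s.eq_empty_or_nonempty with rfl | ⟨x, hx⟩
  · simp
  rcases eq_or_ne (Metric.ediam s) 0 with h0 | h0
  · refine le_trans (ge_of_tendsto' ((tendsto_add_atTop_iff_nat k).2 (tendsto_dyadicCost hl))
      fun i ↦ ?_) zero_le
    refine le_trans (measure_mono ?_)
      (netContent_cylinder_le (dyadicFloor x) (Nat.le_add_left k i))
    rintro _ ⟨y, hy, rfl⟩
    rw [Metric.ediam_eq_zero_iff.1 h0 hy hx]
    exact self_mem_cylinder _ _
  have h1 : (2 : ℝ≥0∞)⁻¹ ^ k ≤ 1 := pow_le_one₀ zero_le (by simp)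
  have htop : Metric.ediam s ≠ ∞ := ((hs.trans h1).trans_lt ENNReal.one_lt_top).ne
  have hcoe (n : ℕ) : ENNReal.ofReal ((1 / 2) ^ n) = (2 : ℝ≥0∞)⁻¹ ^ n := by
    rw [ENNReal.ofReal_pow (by norm_num), one_div, ENNReal.ofReal_inv_of_pos two_pos,
      ENNReal.ofReal_ofNat]
  obtain ⟨n, hn, hn'⟩ := exists_nat_pow_near_of_lt_one (ENNReal.toReal_pos h0 htop)
    (ENNReal.toReal_le_of_le_ofReal zero_le_one (by simpa using hs.trans h1))
    (show (0 : ℝ) < 1 / 2 by norm_num) (by norm_num)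
  have hlt : (2 : ℝ≥0∞)⁻¹ ^ (n + 1) < Metric.ediam s := by
    rw [← hcoe]
    exact (ENNReal.ofReal_lt_iff_lt_toReal (by positivity) htop).2 hn
  have hkn : k ≤ n := by
    by_contra! h
    exact (hlt.trans_le hs).not_ge (pow_le_pow_of_le_one zero_le (by simp) h)
  let I (i : Fin 3) : Set ℝ := {y | ⌊(2 : ℝ) ^ n * y⌋ = ⌊(2 : ℝ) ^ n * x⌋ - 1 + i}
  have hI (i : Fin 3) : netContent (dyadicCost l) k (dyadicFloor '' I i) ≤ dyadicCost l n := by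
    rcases (I i).eq_empty_or_nonempty with h | ⟨y, hy⟩
    · simp [h]
    · refine le_trans (measure_mono ?_) (netContent_cylinder_le (dyadicFloor y) hkn)
      rintro _ ⟨z, hz, rfl⟩
      exact dyadicFloor_mem_cylinder (hz.trans hy.symm)
  have hcover : dyadicFloor '' s ⊆ ⋃ i, dyadicFloor '' I i := by
    rw [← image_iUnion]
    refine image_mono fun y hy ↦ mem_iUnion.2 ?_
    have hd : |2 ^ n * y - 2 ^ n * x| ≤ 1 := by
      have hdist : dist y x ≤ (1 / 2) ^ n := by
        refine le_trans ?_ hn'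
        rw [dist_edist]
        exact ENNReal.toReal_mono htop (Metric.edist_le_ediam_of_mem hy hx)
      rw [Real.dist_eq, one_div, inv_pow, ← one_div, le_div_iff₀ (by positivity)] at hdist
      rwa [← mul_sub, abs_mul, abs_of_pos (by positivity), mul_comm]
    rw [abs_le] at hd
    have hlow : ⌊(2 : ℝ) ^ n * x⌋ - 1 ≤ ⌊(2 : ℝ) ^ n * y⌋ := by
      rw [← Int.floor_sub_one]
      exact Int.floor_mono (by linarith)
    have hupp : ⌊(2 : ℝ) ^ n * y⌋ ≤ ⌊(2 : ℝ) ^ n * x⌋ + 1 := by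
      rw [← Int.floor_add_one]
      exact Int.floor_mono (by linarith)
    refine ⟨⟨(⌊(2 : ℝ) ^ n * y⌋ - (⌊(2 : ℝ) ^ n * x⌋ - 1)).toNat, by lia⟩, ?_⟩
    simp only [I, mem_ofPred_eq]
    lia
  calc netContent (dyadicCost l) k (dyadicFloor '' s)
    _ ≤ ∑ i, netContent (dyadicCost l) k (dyadicFloor '' I i) :=
      (measure_mono hcover).trans (measure_iUnion_fintype_le _ _)
    _ ≤ ∑ _i : Fin 3, dyadicCost l n := Finset.sum_le_sum fun i _ ↦ hI i
    _ = 3 * dyadicCost l n := by simp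
    _ ≤ 3 * (2 * Metric.ediam s) ^ l := by
      gcongr
      refine ENNReal.rpow_le_rpow ?_ hl.le
      calc (2 : ℝ≥0∞)⁻¹ ^ n
        _ = 2 * (2 : ℝ≥0∞)⁻¹ ^ (n + 1) := by
          rw [pow_succ', ← mul_assoc, ENNReal.mul_inv_cancel two_ne_zero ENNReal.ofNat_ne_top,
            one_mul]
        _ ≤ 2 * Metric.ediam s := by gcongr
    _ = 3 * 2 ^ l * Metric.ediam s ^ l := by rw [ENNReal.mul_rpow_of_nonneg _ _ hl.le, mul_assoc]

theorem netContent_image_dyadicFloor_le {l : ℝ} (hl : 0 < l) (k : ℕ) (S : Set ℝ) :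
    netContent (dyadicCost l) k (dyadicFloor '' S) ≤ 3 * 2 ^ l * μH[l] S := by
  have hC : (3 * 2 ^ l : ℝ≥0∞) ≠ ∞ := by finiteness
  have hC0 : (3 * 2 ^ l : ℝ≥0∞) ≠ 0 := by simp
  have := OuterMeasure.le_mkMetric ((3 * 2 ^ l : ℝ≥0∞) • fun r : ℝ≥0∞ ↦ r ^ l)
    (OuterMeasure.comap dyadicFloor (netContent (dyadicCost l) k)) ((2 : ℝ≥0∞)⁻¹ ^ k)
    (pos_iff_ne_zero.2 (pow_ne_zero k (by simp)))
    fun s hs ↦ netContent_image_dyadicFloor_le_of_ediam_le hl hs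
  rw [OuterMeasure.mkMetric_smul _ hC hC0] at this
  rw [Measure.hausdorffMeasure, ← OuterMeasure.coe_mkMetric]
  exact this S

end NetContent

/-- Davies' subset theorem: an analytic set `A ⊆ ℝ` with `ℋ^λ(A) = ∞`
contains, for every `r > 0`, a compact subset `F` with `r ≤ ℋ^λ(F) < ∞`. -/
theorem davies_subset
    (A : Set ℝ) (hA : MeasureTheory.AnalyticSet A)
    (l : ℝ) (hl : 0 < l) (hinf : μH[l] A = ∞) :
    ∀ r : ℝ, 0 < r → ∃ F : Set ℝ, F ⊆ A ∧ IsCompact F ∧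
      ENNReal.ofReal r ≤ μH[l] F ∧ μH[l] F < ∞ := by
  intro r _
  have hc := tendsto_dyadicCost hl
  have hC : (3 * 2 ^ l : ℝ≥0∞) ≠ ∞ := by finiteness
  have hC0 : (3 * 2 ^ l : ℝ≥0∞) ≠ 0 := by simp
  have hA' : AnalyticSet (dyadicFloor '' A) := by
    rw [AnalyticSet] at hA
    rcases hA with rfl | ⟨f, hf, rfl⟩
    · simp at hinf
    · rw [← Set.range_comp, ← Set.image_univ]
      exact MeasurableSet.univ.analyticSet_image (measurable_dyadicFloor.comp hf.measurable)
  obtain ⟨k, hk⟩ : ∃ k, 3 * 2 ^ l * ENNReal.ofReal r <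
      netContent (dyadicCost l) k (dyadicFloor '' A) := by
    refine lt_iSup_iff.1 (lt_of_lt_of_le ?_ (hausdorffMeasure_le_iSup_netContent hl A))
    rw [hinf]
    exact ENNReal.mul_lt_top hC.lt_top ENNReal.ofReal_lt_top
  obtain ⟨K, hKA, hK, hrK⟩ := exists_isCompact_le_netContent hc hA' hk
  obtain ⟨F, hFK, hF, hKF, hFK'⟩ := exists_isCompact_netContent_le (k := k) hc hK
  have hFA := hFK.trans hKA
  have hFr : F ⊆ Set.range dyadicFloor := hFA.trans (Set.image_subset_range _ _)
  have himage : dyadicFloor '' (Function.invFun dyadicFloor '' F) = F := by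
    rw [Set.image_image]
    refine (Set.image_congr fun z hz ↦ ?_).trans (Set.image_id F)
    exact Function.invFun_eq (hFr hz)
  refine ⟨Function.invFun dyadicFloor '' F, ?_,
    hF.image_of_continuousOn (continuousOn_invFun_dyadicFloor.mono hFr), ?_, ?_⟩
  · rw [← Set.image_subset_image_iff dyadicFloor_injective, himage]
    exact hFA
  · have := netContent_image_dyadicFloor_le hl k (Function.invFun dyadicFloor '' F)
    rw [himage] at this
    exact (ENNReal.mul_le_mul_iff_right hC0 hC).1 ((hrK.trans hKF).trans this)
  · refine (hausdorffMeasure_le_iSup_netContent hl _).trans_lt ?_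
    rw [himage]
    exact (iSup_le hFK').trans_lt (netContent_lt_top_of_isCompact (dyadicCost_ne_top k) hK)
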